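/- With the one-step Bellman setup, define the re-estimate estimator Ŷ^re-est := Ṽ(X') − ΔŶ and the noiseless estimator Ŷ^noiseless := L(X) + Ȳ + ½ tr(M̄). Then their biases satisfy, almost surely, E[V(X) − Ŷ^re-est | 𝒢] = E[δ^Ṽ | 𝒢] and E[V(X) − Ŷ^noiseless | 𝒢] = E[δ^Ṽ + δ^hot | 𝒢]. -/

import Mathlib

open MeasureTheory ProbabilityTheory Matrix

/-- The standard Gaussian measure on `ℝⁿ` (coordinates i.i.d. `N(0,1)`). -/
noncomputable def stdGaussian (n : ℕ) : Measure (Fin n → ℝ) :=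
  Measure.pi fun _ => gaussianReal 0 1

/-- The gradient of `f : ℝⁿ → ℝ`, as a vector of partial derivatives. -/
noncomputable def grad {n : ℕ} (f : (Fin n → ℝ) → ℝ) (x : Fin n → ℝ) : Fin n → ℝ :=
  fun i => fderiv ℝ f x (Pi.single i 1)

/-- The Hessian matrix of `f : ℝⁿ → ℝ`. -/
noncomputable def hess {n : ℕ} (f : (Fin n → ℝ) → ℝ) (x : Fin n → ℝ) :
    Matrix (Fin n) (Fin n) ℝ :=
  Matrix.of fun i j => fderiv ℝ (fun y => fderiv ℝ f y (Pi.single j 1)) x (Pi.single i 1)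

/-! Both estimation errors differ from the asserted ones by the same random variable: the Bellman
error `V(X) - L(X) - V'(X')` plus the centered quadratic polynomial
`⟨Z̄, W⟩ + ½ tr(M̄ (W Wᵀ - I))`. Each summand has conditional expectation zero: the first because
`W` is integrated out when `X` is held fixed, the second because `Z̄` and `M̄` are `𝒢`-measurable
while `W` and `W Wᵀ - I` are centered and independent of `𝒢`. -/

section Freezing

variable {Ω α β E : Type*} {m mΩ : MeasurableSpace Ω} [mα : MeasurableSpace α] [MeasurableSpace β]
  [NormedAddCommGroup E] [NormedSpace ℝ E] [CompleteSpace E]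
  {P : Measure Ω} [IsFiniteMeasure P] {X : Ω → α} {W : Ω → β} {f : α × β → E}

theorem condExp_comap_comp_prodMk_of_indepFun (hX : Measurable X) (hW : Measurable W)
    (hXW : IndepFun X W P) (hf : StronglyMeasurable f)
    (hint : Integrable (fun ω => f (X ω, W ω)) P) :
    P[fun ω => f (X ω, W ω) | mα.comap X] =ᵐ[P] fun ω => ∫ w, f (X ω, w) ∂(P.map W) := by
  have hlaw : P.map (fun ω => (X ω, W ω)) = (P.map X).prod (P.map W) :=
    hXW.map_prod_eq_prod_map_map hX.aemeasurable hW.aemeasurable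
  have hfint : Integrable f ((P.map X).prod (P.map W)) := by
    rwa [← hlaw, integrable_map_measure hf.aestronglyMeasurable (by fun_prop)]
  have hinner : StronglyMeasurable fun x => ∫ w, f (x, w) ∂(P.map W) := hf.integral_prod_right'
  refine (ae_eq_condExp_of_forall_setIntegral_eq hX.comap_le hint ?_ ?_ ?_).symm
  · exact fun _ _ _ => (hfint.integral_prod_left.comp_measurable hX).integrableOn
  · rintro _ ⟨t, ht, rfl⟩ -
    calc ∫ ω in X ⁻¹' t, ∫ w, f (X ω, w) ∂(P.map W) ∂P
        = ∫ x in t, ∫ w, f (x, w) ∂(P.map W) ∂(P.map X) :=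
          (setIntegral_map ht hinner.aestronglyMeasurable hX.aemeasurable).symm
      _ = ∫ p in t ×ˢ Set.univ, f p ∂((P.map X).prod (P.map W)) := by
          rw [setIntegral_prod _ hfint.integrableOn, Measure.restrict_univ]
      _ = ∫ ω in X ⁻¹' t, f (X ω, W ω) ∂P := by
          rw [← hlaw, setIntegral_map (ht.prod MeasurableSet.univ) hf.aestronglyMeasurable
            (by fun_prop), Set.mk_preimage_prod, Set.preimage_univ, Set.inter_univ]
  · exact (hinner.comp_measurable (comap_measurable X)).aestronglyMeasurable

theorem condExp_comp_prodMk_of_indep (hm : m ≤ mΩ) (hX : Measurable[m] X) (hW : Measurable W)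
    (hWindep : Indep (MeasurableSpace.comap W inferInstance) m P) (hf : StronglyMeasurable f)
    (hint : Integrable (fun ω => f (X ω, W ω)) P) :
    P[fun ω => f (X ω, W ω) | m] =ᵐ[P] fun ω => ∫ w, f (X ω, w) ∂(P.map W) := by
  -- Freeze `ω` itself: as a random variable with values in `(Ω, m)`, the identity generates `m`.
  have hid : Measurable[mΩ, m] (id : Ω → Ω) := measurable_id'' hm
  have hindep : @IndepFun Ω Ω β mΩ m _ id W P := by
    refine (@IndepFun_iff_Indep Ω Ω β mΩ m _ id W P).2 ?_
    rw [MeasurableSpace.comap_id]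
    exact hWindep.symm
  have hfX : @StronglyMeasurable (Ω × β) E _ (m.prod _) fun p => f (X p.1, p.2) :=
    hf.comp_measurable ((hX.comp (@measurable_fst Ω β m _)).prodMk (@measurable_snd Ω β m _))
  simpa only [MeasurableSpace.comap_id, id] using
    condExp_comap_comp_prodMk_of_indepFun (mα := m) hid hW hindep hfX hint

end Freezing

/-- An integrable random variable with vanishing conditional expectation: a term that can be added
to an estimator without changing its conditional bias. -/
structure CondCentered {Ω : Type*} (m : MeasurableSpace Ω) {mΩ : MeasurableSpace Ω} (P : Measure Ω)
    (f : Ω → ℝ) : Prop where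
  integrable : Integrable f P
  condExp_eq_zero : P[f | m] =ᵐ[P] 0

namespace CondCentered

variable {Ω : Type*} {m mΩ : MeasurableSpace Ω} {P : Measure Ω} {f g : Ω → ℝ}

theorem add (hf : CondCentered m P f) (hg : CondCentered m P g) :
    CondCentered m P fun ω => f ω + g ω where
  integrable := hf.integrable.add hg.integrable
  condExp_eq_zero := (condExp_add hf.integrable hg.integrable m).trans <| by
    simpa using hf.condExp_eq_zero.add hg.condExp_eq_zero

theorem const_mul (hf : CondCentered m P f) (c : ℝ) : CondCentered m P fun ω => c * f ω where
  integrable := hf.integrable.const_mul c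
  condExp_eq_zero := (condExp_smul c f m).trans <| by
    simpa using hf.condExp_eq_zero.const_smul c

theorem sum {ι : Type*} {s : Finset ι} {F : ι → Ω → ℝ} (hF : ∀ i ∈ s, CondCentered m P (F i)) :
    CondCentered m P fun ω => ∑ i ∈ s, F i ω := by
  classical
  induction s using Finset.induction_on with
  | empty => exact ⟨integrable_zero Ω ℝ P, condExp_zero.eventuallyEq⟩
  | insert i s his ih =>
    simp only [Finset.sum_insert his]
    exact (hF i (s.mem_insert_self i)).add (ih fun j hj => hF j (Finset.mem_insert_of_mem hj))

theorem condExp_add_right (hf : CondCentered m P f) (hg : Integrable g P) :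
    P[fun ω => g ω + f ω | m] =ᵐ[P] P[g | m] :=
  (condExp_add hg hf.integrable m).trans <| by
    simpa using (Filter.EventuallyEq.refl _ P[g | m]).add hf.condExp_eq_zero

theorem of_condExp_ae_eq [IsFiniteMeasure P] (hm : m ≤ mΩ) (hf : Integrable f P)
    (hfg : P[f | m] =ᵐ[P] g) : CondCentered m P fun ω => g ω - f ω where
  integrable := (integrable_condExp.congr hfg).sub hf
  condExp_eq_zero := by
    have hg : P[g | m] =ᵐ[P] P[f | m] :=
      (condExp_congr_ae hfg.symm).trans (condExp_condExp_of_le le_rfl hm)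
    refine (condExp_sub (integrable_condExp.congr hfg) hf m).trans ?_
    simpa using hg.sub (Filter.EventuallyEq.refl _ P[f | m])

theorem mul_of_indep [IsFiniteMeasure P] {m' : MeasurableSpace Ω} (hm : m ≤ mΩ) (hm' : m' ≤ mΩ)
    (hindep : Indep m' m P) (hf : Measurable[m] f) (hfint : Integrable f P)
    (hg : Measurable[m'] g) (hgint : Integrable g P) (hg0 : ∫ ω, g ω ∂P = 0) :
    CondCentered m P fun ω => f ω * g ω := by
  have hfg : Integrable (f * g) P :=
    IndepFun.integrable_mul ((IndepFun_iff_Indep f g P).2 <|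
      indep_of_indep_of_le_left (indep_of_indep_of_le_right hindep.symm hg.comap_le)
        hf.comap_le) hfint hgint
  have hg_condExp : P[g | m] =ᵐ[P] fun _ => 0 :=
    hg0 ▸ condExp_indep_eq hm' hm hg.stronglyMeasurable hindep
  refine ⟨hfg, (condExp_mul_of_stronglyMeasurable_left hf.stronglyMeasurable hfg hgint).trans ?_⟩
  filter_upwards [hg_condExp] with ω hω
  simp only [Pi.mul_apply, hω, mul_zero, Pi.zero_apply]

end CondCentered

/-- A random vector in isotropic position: its coordinates are square integrable and centered, and
its covariance matrix is the identity. It models the noise driving one step of the dynamics. -/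
structure IsIsotropic {Ω ι : Type*} [DecidableEq ι] {mΩ : MeasurableSpace Ω}
    (W : Ω → ι → ℝ) (P : Measure Ω) : Prop where
  memLp_two : ∀ i, MemLp (fun ω => W ω i) 2 P
  integral_eq_zero : ∀ i, ∫ ω, W ω i ∂P = 0
  covariance_eq_one_apply :
    ∀ i j, cov[fun ω => W ω i, fun ω => W ω j; P] = (1 : Matrix ι ι ℝ) i j

section Isotropic

variable {Ω ι : Type*} [DecidableEq ι] {mΩ : MeasurableSpace Ω} {P : Measure Ω} {W : Ω → ι → ℝ}

theorem isIsotropic_of_pairwise_indepFun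
    (hW : Pairwise fun i j => IndepFun (fun ω => W ω i) (fun ω => W ω j) P)
    (hmem : ∀ i, MemLp (fun ω => W ω i) 2 P) (hmean : ∀ i, ∫ ω, W ω i ∂P = 0)
    (hvar : ∀ i, Var[fun ω => W ω i; P] = 1) : IsIsotropic W P where
  memLp_two := hmem
  integral_eq_zero := hmean
  covariance_eq_one_apply i j := by
    rcases eq_or_ne i j with rfl | hij
    · rw [covariance_self (hmem i).aemeasurable, hvar, one_apply_eq]
    · rw [(hW hij).covariance_eq_zero (hmem i) (hmem j), one_apply_ne hij]

theorem isIsotropic_of_map_eq_stdGaussian [IsProbabilityMeasure P] {n : ℕ} {W : Ω → Fin n → ℝ}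
    (hW : Measurable W) (hlaw : P.map W = _root_.stdGaussian n) : IsIsotropic W P := by
  have hcoord (i : Fin n) : HasLaw (fun ω => W ω i) (gaussianReal 0 1) P :=
    (measurePreserving_eval (fun _ : Fin n => gaussianReal 0 1) i).hasLaw.comp
      ⟨hW.aemeasurable, hlaw⟩
  have hindep : iIndepFun (fun i ω => W ω i) P := by
    rw [iIndepFun_iff_map_fun_eq_pi_map fun i => (hcoord i).aemeasurable]
    simp only [(hcoord _).map_eq]
    exact hlaw
  have hmem (i : Fin n) : MemLp id 2 (P.map fun ω => W ω i) := by
    rw [(hcoord i).map_eq]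
    exact memLp_id_gaussianReal 2
  refine isIsotropic_of_pairwise_indepFun (fun i j hij => hindep.indepFun hij)
    (fun i => (hmem i).comp_of_map (hcoord i).aemeasurable) (fun i => ?_) (fun i => ?_)
  · rw [(hcoord i).integral_eq, integral_id_gaussianReal]
  · rw [(hcoord i).variance_eq, variance_id_gaussianReal, NNReal.coe_one]

theorem IsIsotropic.integrable_mul (hW : IsIsotropic W P) (i j : ι) :
    Integrable (fun ω => W ω i * W ω j) P :=
  (hW.memLp_two i).integrable_mul (hW.memLp_two j)

theorem IsIsotropic.integral_mul_sub_one_apply [IsProbabilityMeasure P] (hW : IsIsotropic W P)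
    (i j : ι) : ∫ ω, (W ω i * W ω j - (1 : Matrix ι ι ℝ) i j) ∂P = 0 := by
  have hmoment : ∫ ω, W ω i * W ω j ∂P = (1 : Matrix ι ι ℝ) i j := by
    simpa [hW.integral_eq_zero, hW.covariance_eq_one_apply] using
      (covariance_eq_sub (hW.memLp_two i) (hW.memLp_two j)).symm
  rw [integral_sub (hW.integrable_mul i j) (integrable_const _), hmoment, integral_const,
    probReal_univ, one_smul, sub_self]

end Isotropic

section CenteredQuadratic

variable {ι : Type*} [Fintype ι] [DecidableEq ι]

/-- The quadratic polynomial `⟨z, w⟩ + ½ tr(M (w wᵀ - I))`, the noise term of the Taylor estimator;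
it has mean zero when `w` is isotropic. -/
noncomputable def centeredQuadratic (z : ι → ℝ) (M : Matrix ι ι ℝ) (w : ι → ℝ) : ℝ :=
  z ⬝ᵥ w + (1 / 2) * trace (M * (vecMulVec w w - 1))

theorem dotProduct_mulVec_eq_trace_add_trace (M : Matrix ι ι ℝ) (w : ι → ℝ) :
    w ⬝ᵥ M *ᵥ w = trace (M * (vecMulVec w w - 1)) + trace M := by
  rw [mul_sub, mul_one, trace_sub, mul_vecMulVec, trace_vecMulVec, sub_add_cancel, dotProduct_comm]

theorem centeredQuadratic_eq_sum (z : ι → ℝ) (M : Matrix ι ι ℝ) (w : ι → ℝ) :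
    centeredQuadratic z M w = ∑ i, z i * w i +
      (1 / 2) * ∑ i, ∑ j, M i j * (w j * w i - (1 : Matrix ι ι ℝ) j i) := by
  simp only [centeredQuadratic, dotProduct, trace, diag, mul_apply, Matrix.sub_apply,
    vecMulVec_apply]

theorem IsIsotropic.condCentered_centeredQuadratic {Ω : Type*} {m mΩ : MeasurableSpace Ω}
    {P : Measure Ω} [IsProbabilityMeasure P] {W : Ω → ι → ℝ} (hiso : IsIsotropic W P)
    (hm : m ≤ mΩ) (hW : Measurable W) (hWindep : Indep (MeasurableSpace.comap W inferInstance) m P)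
    {z : Ω → ι → ℝ} (hz : ∀ i, Measurable[m] fun ω => z ω i)
    (hzint : ∀ i, Integrable (fun ω => z ω i) P)
    {M : Ω → Matrix ι ι ℝ} (hM : ∀ i j, Measurable[m] fun ω => M ω i j)
    (hMint : ∀ i j, Integrable (fun ω => M ω i j) P) :
    CondCentered m P fun ω => centeredQuadratic (z ω) (M ω) (W ω) := by
  have hWi (i : ι) : Measurable[MeasurableSpace.comap W inferInstance] fun ω => W ω i :=
    (measurable_pi_apply i).comp (comap_measurable W)
  have hlin (i : ι) : CondCentered m P fun ω => z ω i * W ω i :=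
    .mul_of_indep hm hW.comap_le hWindep (hz i) (hzint i) (hWi i)
      ((hiso.memLp_two i).integrable one_le_two) (hiso.integral_eq_zero i)
  have hquad (i j : ι) :
      CondCentered m P fun ω => M ω i j * (W ω j * W ω i - (1 : Matrix ι ι ℝ) j i) :=
    .mul_of_indep hm hW.comap_le hWindep (hM i j) (hMint i j) (((hWi j).mul (hWi i)).sub_const _)
      ((hiso.integrable_mul j i).sub (integrable_const _))
      (hiso.integral_mul_sub_one_apply j i)
  simp only [centeredQuadratic_eq_sum]
  exact (CondCentered.sum fun i _ => hlin i).add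
    ((CondCentered.sum fun i _ => .sum fun j _ => hquad i j).const_mul _)

end CenteredQuadratic

section MatrixMeasurability

variable {α R l m n : Type*} {mα : MeasurableSpace α} [Fintype m] [NonUnitalNonAssocSemiring R]
  [MeasurableSpace R] [MeasurableAdd₂ R] [MeasurableMul₂ R] {A : α → Matrix l m R}

theorem measurable_mulVec_apply (hA : ∀ i j, Measurable fun a => A a i j) {v : α → m → R}
    (hv : ∀ j, Measurable fun a => v a j) (i : l) : Measurable fun a => (A a *ᵥ v a) i :=
  Finset.measurable_sum _ fun j _ => (hA i j).mul (hv j)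

theorem measurable_matrix_mul_apply (hA : ∀ i j, Measurable fun a => A a i j)
    {B : α → Matrix m n R} (hB : ∀ j k, Measurable fun a => B a j k) (i : l) (k : n) :
    Measurable fun a => (A a * B a) i k :=
  Finset.measurable_sum _ fun j _ => (hA i j).mul (hB j k)

end MatrixMeasurability

theorem measurable_grad_apply {n : ℕ} (f : (Fin n → ℝ) → ℝ) (i : Fin n) :
    Measurable fun x => grad f x i :=
  measurable_fderiv_apply_const ℝ f _

theorem measurable_hess_apply {n : ℕ} (f : (Fin n → ℝ) → ℝ) (i j : Fin n) :
    Measurable fun x => hess f x i j :=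
  measurable_fderiv_apply_const ℝ _ _

theorem condCentered_bellman_error {Ω α β : Type*} {m mΩ : MeasurableSpace Ω}
    [MeasurableSpace α] [MeasurableSpace β] {P : Measure Ω} [IsFiniteMeasure P] (hm : m ≤ mΩ)
    {X : Ω → α} (hX : Measurable[m] X) {W : Ω → β} (hW : Measurable W)
    (hWindep : Indep (MeasurableSpace.comap W inferInstance) m P)
    {U : α → β → ℝ} (hU : Measurable (Function.uncurry U))
    (hUint : Integrable (fun ω => U (X ω) (W ω)) P)
    {V L : α → ℝ} (hV : ∀ x, V x = L x + ∫ w, U x w ∂(P.map W)) :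
    CondCentered m P fun ω => V (X ω) - L (X ω) - U (X ω) (W ω) := by
  simp only [hV, add_sub_cancel_left]
  exact .of_condExp_ae_eq hm hUint
    (condExp_comp_prodMk_of_indep hm hX hW hWindep hU.stronglyMeasurable hUint)

theorem reestimate_noiseless_bias_general
    {Ω 𝓧 𝓨 ι : Type*} {𝒢 mΩ : MeasurableSpace Ω} [MeasurableSpace 𝓧] [MeasurableSpace 𝓨]
    [Fintype ι] [DecidableEq ι] {P : Measure Ω} [IsProbabilityMeasure P] (h𝒢 : 𝒢 ≤ mΩ)
    {W : Ω → ι → ℝ} (hW : Measurable W) (hWiso : IsIsotropic W P)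
    (hWindep : Indep (MeasurableSpace.comap W inferInstance) 𝒢 P)
    {X : Ω → 𝓧} (hX : Measurable[𝒢] X)
    {Φ : 𝓧 → (ι → ℝ) → 𝓨} (hΦ : Measurable (Function.uncurry Φ))
    {X' : Ω → 𝓨} (hX' : ∀ ω, X' ω = Φ (X ω) (W ω))
    {V' : 𝓨 → ℝ} (hV'meas : Measurable V') (hV'int : Integrable (fun ω => V' (X' ω)) P)
    {V L : 𝓧 → ℝ} (hV : ∀ x, V x = L x + ∫ w, V' (Φ x w) ∂(P.map W))
    (Vt : 𝓨 → ℝ) (Yb : Ω → ℝ)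
    {Zb : Ω → ι → ℝ} (hZb : ∀ i, Measurable[𝒢] fun ω => Zb ω i)
    (hZbint : ∀ i, Integrable (fun ω => Zb ω i) P)
    {Mb : Ω → Matrix ι ι ℝ} (hMb : ∀ i j, Measurable[𝒢] fun ω => Mb ω i j)
    (hMbint : ∀ i j, Integrable (fun ω => Mb ω i j) P)
    {δhot : Ω → ℝ} (hδhot : ∀ ω, δhot ω =
      Vt (X' ω) - (Yb ω + Zb ω ⬝ᵥ W ω + (1 / 2) * (W ω ⬝ᵥ Mb ω *ᵥ W ω)))
    {δVt : Ω → ℝ} (hδVt : ∀ ω, δVt ω = V' (X' ω) - Vt (X' ω))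
    {ΔYh : Ω → ℝ} (hΔYh : ∀ ω, ΔYh ω =
      -L (X ω) + Zb ω ⬝ᵥ W ω + (1 / 2) * trace (Mb ω * (vecMulVec (W ω) (W ω) - 1)))
    {Yre : Ω → ℝ} (hYre : ∀ ω, Yre ω = Vt (X' ω) - ΔYh ω)
    {Ynl : Ω → ℝ} (hYnl : ∀ ω, Ynl ω = L (X ω) + Yb ω + (1 / 2) * trace (Mb ω))
    (hδhotint : Integrable δhot P) (hδVtint : Integrable δVt P) :
    P[fun ω => V (X ω) - Yre ω | 𝒢] =ᵐ[P] P[δVt | 𝒢] ∧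
      P[fun ω => V (X ω) - Ynl ω | 𝒢] =ᵐ[P] P[fun ω => δVt ω + δhot ω | 𝒢] := by
  simp only [hX'] at hV'int
  let D ω := V (X ω) - L (X ω) - V' (Φ (X ω) (W ω)) + centeredQuadratic (Zb ω) (Mb ω) (W ω)
  have hD : CondCentered 𝒢 P D :=
    (condCentered_bellman_error h𝒢 hX hW hWindep (U := fun x w => V' (Φ x w)) (hV'meas.comp hΦ)
      hV'int hV).add
    (hWiso.condCentered_centeredQuadratic h𝒢 hW hWindep hZb hZbint hMb hMbint)
  have hre (ω) : V (X ω) - Yre ω = δVt ω + D ω := by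
    rw [hYre, hΔYh, hδVt, hX']
    simp only [D, centeredQuadratic]
    ring
  have hnl (ω) : V (X ω) - Ynl ω = δVt ω + δhot ω + D ω := by
    rw [hYnl, hδVt, hδhot, hX', dotProduct_mulVec_eq_trace_add_trace]
    simp only [D, centeredQuadratic]
    ring
  simp only [hre, hnl]
  exact ⟨hD.condExp_add_right hδVtint, hD.condExp_add_right (hδVtint.add hδhotint)⟩

/-- **Biases of the re-estimate and noiseless estimators.**
With the one-step Bellman setup, for `Ŷ^re-est := Ṽ(X') − ΔŶ` and
`Ŷ^noiseless := L(X) + Ȳ + ½ tr(M̄)`, almost surely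
`E[V(X) − Ŷ^re-est | 𝒢] = E[δ^Ṽ | 𝒢]` and
`E[V(X) − Ŷ^noiseless | 𝒢] = E[δ^Ṽ + δ^hot | 𝒢]`. -/
theorem reestimate_noiseless_bias
    {Ω : Type*} (𝒢 : MeasurableSpace Ω) [mΩ : MeasurableSpace Ω]
    (P : Measure Ω) [IsProbabilityMeasure P]
    {n : ℕ} (h𝒢 : 𝒢 ≤ mΩ)
    -- the noise W : i.i.d. standard normal coordinates, independent of 𝒢
    (W : Ω → Fin n → ℝ) (hWmeas : Measurable W)
    (hWlaw : Measure.map W P = stdGaussian n)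
    (hWindep : Indep (MeasurableSpace.comap W inferInstance) 𝒢 P)
    -- the current state X is 𝒢-measurable; dynamics data F, Σ, L
    (X : Ω → Fin n → ℝ) (hX : Measurable[𝒢] X)
    (F : (Fin n → ℝ) → Fin n → ℝ) (hF : Measurable F)
    (S : (Fin n → ℝ) → Matrix (Fin n) (Fin n) ℝ) (hS : ∀ i j, Measurable fun x => S x i j)
    (L : (Fin n → ℝ) → ℝ) (hL : Measurable L)
    -- X̄ := X + F(X), X' := X̄ + Σ(X) W
    (Xb : Ω → Fin n → ℝ) (hXb : ∀ ω, Xb ω = X ω + F (X ω))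
    (X' : Ω → Fin n → ℝ) (hX' : ∀ ω, X' ω = Xb ω + (S (X ω)).mulVec (W ω))
    -- the next-step value function V' and the one-step Bellman value V
    (V' : (Fin n → ℝ) → ℝ) (hV'meas : Measurable V')
    (hV'int : Integrable (fun ω => V' (X' ω)) P)
    (V : (Fin n → ℝ) → ℝ)
    (hV : ∀ x, V x = L x + ∫ w, V' (x + F x + (S x).mulVec w) ∂(stdGaussian n))
    -- the C² value function approximation Ṽ and associated Ȳ, Z̄, M̄
    (Vt : (Fin n → ℝ) → ℝ) (hVt : ContDiff ℝ 2 Vt)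
    (hVtint : Integrable (fun ω => Vt (X' ω)) P)
    (Zb : Ω → Fin n → ℝ) (hZb : ∀ ω, Zb ω = (S (X ω))ᵀ.mulVec (grad Vt (Xb ω)))
    (Mb : Ω → Matrix (Fin n) (Fin n) ℝ)
    (hMb : ∀ ω, Mb ω = (S (X ω))ᵀ * hess Vt (Xb ω) * S (X ω))
    (hZbint : ∀ i, Integrable (fun ω => Zb ω i) P)
    (hMbint : ∀ i j, Integrable (fun ω => Mb ω i j) P)
    -- the Taylor remainder δ^hot and the representation error δ^Ṽ
    (δhot : Ω → ℝ)
    (hδhot : ∀ ω, δhot ω = Vt (X' ω) - (Vt (Xb ω) + (∑ i, Zb ω i * W ω i)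
      + (1 / 2) * ∑ i, W ω i * (Mb ω).mulVec (W ω) i))
    (δVt : Ω → ℝ) (hδVt : ∀ ω, δVt ω = V' (X' ω) - Vt (X' ω))
    -- the Taylor estimator ΔŶ
    (ΔYh : Ω → ℝ)
    (hΔYh : ∀ ω, ΔYh ω = -L (X ω) + (∑ i, Zb ω i * W ω i)
      + (1 / 2) * Matrix.trace (Mb ω * (Matrix.vecMulVec (W ω) (W ω) - 1)))
    -- the re-estimate and noiseless estimators
    (Yre : Ω → ℝ) (hYre : ∀ ω, Yre ω = Vt (X' ω) - ΔYh ω)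
    (Ynl : Ω → ℝ)
    (hYnl : ∀ ω, Ynl ω = L (X ω) + Vt (Xb ω) + (1 / 2) * Matrix.trace (Mb ω))
    -- integrability of all displayed random variables
    (hΔYhint : Integrable ΔYh P)
    (hYreint : Integrable Yre P) (hYnlint : Integrable Ynl P)
    (hδhotint : Integrable δhot P) (hδVtint : Integrable δVt P)
    (hLint : Integrable (fun ω => L (X ω)) P)
    (hVint : Integrable (fun ω => V (X ω)) P) :
    P[fun ω => V (X ω) - Yre ω|𝒢] =ᵐ[P] P[δVt|𝒢] ∧
      P[fun ω => V (X ω) - Ynl ω|𝒢] =ᵐ[P] P[fun ω => δVt ω + δhot ω|𝒢] := by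
  have hXbmeas : Measurable[𝒢] Xb := funext hXb ▸ hX.add (hF.comp hX)
  have hSX (i j) : Measurable[𝒢] fun ω => S (X ω) i j := (hS i j).comp hX
  have hZbmeas (i) : Measurable[𝒢] fun ω => Zb ω i := by
    simp only [hZb]
    exact measurable_mulVec_apply (fun i j => hSX j i)
      (fun j => (measurable_grad_apply Vt j).comp hXbmeas) i
  have hMbmeas (i j) : Measurable[𝒢] fun ω => Mb ω i j := by
    simp only [hMb]
    exact measurable_matrix_mul_apply (measurable_matrix_mul_apply (fun i j => hSX j i)
      fun i j => (measurable_hess_apply Vt i j).comp hXbmeas) hSX i j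
  have hΦ : Measurable (Function.uncurry fun x w => x + F x + S x *ᵥ w) :=
    (measurable_fst.add (hF.comp measurable_fst)).add <| measurable_pi_lambda _ <|
      measurable_mulVec_apply (fun i j => (hS i j).comp measurable_fst)
        fun j => (measurable_pi_apply j).comp measurable_snd
  exact reestimate_noiseless_bias_general h𝒢 hWmeas (isIsotropic_of_map_eq_stdGaussian hWmeas hWlaw)
    hWindep hX hΦ (fun ω => by rw [hX', hXb]) hV'meas hV'int (hWlaw ▸ hV) Vt (fun ω => Vt (Xb ω))
    hZbmeas hZbint hMbmeas hMbint hδhot hδVt hΔYh hYre hYnl hδhotint hδVtint
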